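/- Let p < q be primes and let G be a nonabelian group of order p·q (so necessarily p divides q−1). Let Q be the unique subgroup of G of order q and let P be a subgroup of G of order p. Then for every g ∈ G: p·|Fix_{G/P}(g)| + |Fix_{G/Q}(g)| equals p·q + p if g = 1 and equals p otherwise. Consequently, the disjoint union of p copies of G/P and one copy of G/Q is linearly equivalent to the disjoint union of p one-point G-sets and one copy of G with its regular action, and these two G-sets form an unbalanced pair. -/

import Mathlib

open MulAction

/-- Two `G`-sets are *linearly equivalent* if every `g ∈ G` has the same number of
fixed points in each. -/
def IsLinEquiv (G : Type) [Group G] (X Y : Type) [MulAction G X] [MulAction G Y] : Prop :=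
  ∀ g : G, Nat.card (fixedBy X g) = Nat.card (fixedBy Y g)

/-- The number of `G`-orbits of cardinality `n` in the `G`-set `X`. -/
noncomputable def orbitCountOfSize (G : Type) [Group G] (X : Type) [MulAction G X] (n : ℕ) : ℕ :=
  Nat.card {o : orbitRel.Quotient G X // Nat.card o.orbit = n}

/-- An *unbalanced pair* of `G`-sets: linearly equivalent, but differing in the number of
orbits of some cardinality. -/
def IsUnbalancedPair (G : Type) [Group G] (X Y : Type) [MulAction G X] [MulAction G Y] : Prop :=
  IsLinEquiv G X Y ∧ ∃ n : ℕ, orbitCountOfSize G X n ≠ orbitCountOfSize G Y n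

/-!
A nonabelian group of order `p * q` is a Frobenius group with kernel `Q` and complement `P`: if
nontrivial `h ∈ P` and `x ∈ Q` commuted, `h * x` would have order `p * q`. The theorem holds for
every finite Frobenius group. A nontrivial element of `Q` fixes nothing in `G ⧸ P` and everything in
`G ⧸ Q`. An element `g ∉ Q` fixes nothing in `G ⧸ Q` and exactly one point of `G ⧸ P`: writing
`g = u * h` with `u ∈ Q` and `1 ≠ h ∈ P`, conjugation by `h` is a fixed-point-free automorphism of
the finite group `Q`, so `x ↦ x * (h * x * h⁻¹)⁻¹` is a permutation of `Q`, and the `x` that it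
sends to `u` satisfies `g = x * h * x⁻¹`. Only the second `G`-set of the pair has one-point orbits.
-/

section FixedPoints

variable {G : Type*} [Group G]

lemma mk_mem_fixedBy_quotient_iff {H : Subgroup G} {g x : G} :
    (x : G ⧸ H) ∈ fixedBy (G ⧸ H) g ↔ x⁻¹ * g * x ∈ H := by
  rw [mem_fixedBy, MulAction.Quotient.smul_mk, eq_comm, QuotientGroup.eq, smul_eq_mul, mul_assoc]

lemma fixedBy_quotient_eq_empty_of_disjoint {N H : Subgroup G} [N.Normal] (hNH : Disjoint N H)
    {g : G} (hgN : g ∈ N) (hg : g ≠ 1) : fixedBy (G ⧸ H) g = ∅ := by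
  refine Set.eq_empty_of_forall_notMem fun y => QuotientGroup.induction_on y fun x hx => hg ?_
  have hconj_mem : x⁻¹ * g * x ∈ N := ‹N.Normal›.conj_mem' g hgN x
  have hconj : x⁻¹ * g * x = 1 :=
    Subgroup.disjoint_def.1 hNH hconj_mem (mk_mem_fixedBy_quotient_iff.1 hx)
  simpa [mul_assoc, inv_mul_eq_one] using hconj

lemma fixedBy_quotient_of_mem_normal {N : Subgroup G} [N.Normal] {g : G} (hg : g ∈ N) :
    fixedBy (G ⧸ N) g = Set.univ :=
  Set.eq_univ_of_forall fun y => QuotientGroup.induction_on y fun x =>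
    mk_mem_fixedBy_quotient_iff.2 (‹N.Normal›.conj_mem' g hg x)

lemma fixedBy_quotient_of_notMem_normal {N : Subgroup G} [N.Normal] {g : G} (hg : g ∉ N) :
    fixedBy (G ⧸ N) g = ∅ := by
  refine Set.eq_empty_of_forall_notMem fun y => QuotientGroup.induction_on y fun x hx => hg ?_
  simpa [mul_assoc] using
    ‹N.Normal›.conj_mem _ (mk_mem_fixedBy_quotient_iff.1 hx) x

lemma fixedBy_self_eq_empty {g : G} (hg : g ≠ 1) : fixedBy G g = ∅ :=
  Set.eq_empty_of_forall_notMem fun x hx => hg (by simpa using hx)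

lemma fixedPoints_quotient_eq_empty {H : Subgroup G} (hH : H ≠ ⊤) :
    fixedPoints G (G ⧸ H) = ∅ := by
  refine Set.eq_empty_of_forall_notMem fun y => QuotientGroup.induction_on y fun x hx => hH ?_
  refine H.eq_top_iff'.2 fun g => ?_
  simpa [mul_assoc] using mk_mem_fixedBy_quotient_iff.1 (hx (x * g * x⁻¹))

variable {X Y : Type*} [MulAction G X] [MulAction G Y]

lemma card_fixedBy_one : Nat.card (fixedBy X (1 : G)) = Nat.card X := by
  rw [fixedBy_one_eq_univ, Nat.card_univ]

lemma card_fixedBy_sum [Finite X] [Finite Y] (g : G) :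
    Nat.card (fixedBy (X ⊕ Y) g) = Nat.card (fixedBy X g) + Nat.card (fixedBy Y g) := by
  have e : fixedBy (X ⊕ Y) g ≃ fixedBy X g ⊕ fixedBy Y g :=
    Equiv.subtypeSum.trans <|
      .sumCongr (.subtypeEquivRight <| by simp) (.subtypeEquivRight <| by simp)
  rw [Nat.card_congr e, Nat.card_sum]

lemma card_fixedBy_sigma_const (ι : Type*) (g : G) :
    Nat.card (fixedBy ((_ : ι) × X) g) = Nat.card ι * Nat.card (fixedBy X g) := by
  have e : fixedBy ((_ : ι) × X) g ≃ ι × fixedBy X g :=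
    { toFun z := (z.1.1, ⟨z.1.2, eq_of_heq (Sigma.ext_iff.1 z.2).2⟩)
      invFun z := ⟨⟨z.1, z.2.1⟩, Sigma.ext rfl (heq_of_eq z.2.2)⟩ }
  rw [Nat.card_congr e, Nat.card_prod]

lemma natCard_orbit_eq_one_iff {x : X} :
    Nat.card (orbit G x) = 1 ↔ x ∈ fixedPoints G X := by
  rw [← subsingleton_orbit_iff_mem_fixedPoints, Nat.card_eq_one_iff_unique, Set.subsingleton_coe]
  exact and_iff_left (nonempty_orbit x).to_subtype

end FixedPoints

lemma orbitCountOfSize_one_eq_zero_iff {G X : Type} [Group G] [MulAction G X] [Finite X] :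
    orbitCountOfSize G X 1 = 0 ↔ fixedPoints G X = ∅ := by
  have : Finite (orbitRel.Quotient G X) := Quotient.finite _
  rw [orbitCountOfSize, Finite.card_eq_zero_iff, isEmpty_subtype, Set.eq_empty_iff_forall_notMem]
  simp only [← natCard_orbit_eq_one_iff, ← orbitRel.Quotient.orbit_mk]
  exact Quotient.forall

/-- `G` is a Frobenius group with kernel `K` and complement `H`: the internal semidirect product
`G = K ⋊ H`, with every nontrivial element of `H` acting on `K` by conjugation without nontrivial
fixed points. The degenerate cases `K = ⊥` and `H = ⊥` are allowed. -/
structure IsFrobeniusDecomposition {G : Type*} [Group G] (K H : Subgroup G) : Prop where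
  normal : K.Normal
  isComplement' : K.IsComplement' H
  eq_one_of_commute {h x : G} : h ∈ H → h ≠ 1 → x ∈ K → Commute h x → x = 1

namespace IsFrobeniusDecomposition

section

variable {G : Type*} [Group G] {K H : Subgroup G}

lemma exists_conj_mem_complement [Finite K] (hKH : IsFrobeniusDecomposition K H) {g : G}
    (hg : g ∉ K) : ∃ x : G, x⁻¹ * g * x ∈ H := by
  have := hKH.normal
  obtain ⟨⟨u, h⟩, rfl : (u : G) * h = g⟩ := hKH.isComplement'.2 g
  have hh : (h : G) ≠ 1 := fun hh => hg (by simp [hh])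
  have conj_fixedPointFree : MonoidHom.FixedPointFree (MulAut.conjNormal (H := K) (h : G)) := by
    intro x hx
    refine Subtype.ext (hKH.eq_one_of_commute h.2 hh x.2 ?_)
    simpa [mul_inv_eq_iff_eq_mul, commute_iff_eq] using congrArg Subtype.val hx
  obtain ⟨x, hx⟩ := conj_fixedPointFree.commutatorMap_surjective u
  refine ⟨x, ?_⟩
  have hconj : (x : G)⁻¹ * (u * h) * x = h := by
    rw [← hx]
    simp [div_eq_mul_inv, mul_assoc]
  rw [hconj]
  exact h.2

lemma mem_complement_of_conj_mem (hKH : IsFrobeniusDecomposition K H) {h x : G} (hh : h ∈ H)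
    (hh1 : h ≠ 1) (hconj : x⁻¹ * h * x ∈ H) : x ∈ H := by
  obtain ⟨⟨u, k⟩, rfl : (u : G) * k = x⟩ := hKH.isComplement'.2 x
  have conj_mem : (u : G)⁻¹ * h * u ∈ H := by
    simpa [mul_assoc] using H.mul_mem (H.mul_mem k.2 hconj) (H.inv_mem k.2)
  have commutator_mem_kernel : (u : G)⁻¹ * h * u * h⁻¹ ∈ K := by
    simpa [mul_assoc] using
      K.mul_mem (K.inv_mem u.2) (hKH.normal.conj_mem u u.2 h)
  have commutator_eq_one : (u : G)⁻¹ * h * u * h⁻¹ = 1 :=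
    Subgroup.disjoint_def.1 hKH.isComplement'.disjoint commutator_mem_kernel
      (H.mul_mem conj_mem (H.inv_mem hh))
  have commute : Commute h (u : G) := by
    rwa [mul_inv_eq_one, mul_assoc, inv_mul_eq_iff_eq_mul] at commutator_eq_one
  rw [hKH.eq_one_of_commute hh hh1 u.2 commute, one_mul]
  exact k.2

lemma subsingleton_fixedBy_quotient (hKH : IsFrobeniusDecomposition K H) {g : G} (hg : g ≠ 1) :
    (fixedBy (G ⧸ H) g).Subsingleton := by
  intro a hx b hy
  obtain ⟨x, rfl⟩ := QuotientGroup.mk_surjective a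
  obtain ⟨y, rfl⟩ := QuotientGroup.mk_surjective b
  rw [mk_mem_fixedBy_quotient_iff] at hx hy
  refine QuotientGroup.eq.2 (hKH.mem_complement_of_conj_mem hx ?_ ?_)
  · simpa [mul_assoc, inv_mul_eq_one] using hg
  · simpa [mul_assoc] using hy

lemma card_fixedBy_quotient_of_notMem_kernel [Finite K] (hKH : IsFrobeniusDecomposition K H)
    {g : G} (hg : g ∉ K) : Nat.card (fixedBy (G ⧸ H) g) = 1 := by
  obtain ⟨x, hx⟩ := hKH.exists_conj_mem_complement hg
  have hg1 : g ≠ 1 := fun h => hg (h ▸ K.one_mem)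
  exact Nat.card_eq_one_iff_unique.2
    ⟨(hKH.subsingleton_fixedBy_quotient hg1).coe_sort, ⟨x, mk_mem_fixedBy_quotient_iff.2 hx⟩⟩

lemma card_mul_card_fixedBy_add_card_fixedBy [Finite K] [DecidableEq G]
    (hKH : IsFrobeniusDecomposition K H) (g : G) :
    Nat.card H * Nat.card (fixedBy (G ⧸ H) g) + Nat.card (fixedBy (G ⧸ K) g)
      = if g = 1 then Nat.card G + Nat.card H else Nat.card H := by
  have := hKH.normal
  have card_quotient_kernel : Nat.card (G ⧸ K) = Nat.card H := hKH.isComplement'.symm.index_eq_card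
  split_ifs with hg1
  · rw [hg1, card_fixedBy_one, card_fixedBy_one, card_quotient_kernel, ← Subgroup.index_eq_card,
      H.card_mul_index]
  by_cases hgK : g ∈ K
  · rw [fixedBy_quotient_eq_empty_of_disjoint hKH.isComplement'.disjoint hgK hg1,
      fixedBy_quotient_of_mem_normal hgK, Nat.card_univ, card_quotient_kernel]
    simp
  · rw [hKH.card_fixedBy_quotient_of_notMem_kernel hgK, fixedBy_quotient_of_notMem_normal hgK]
    simp

end

variable {G : Type} [Group G] [Finite G] {K H : Subgroup G}

lemma isLinEquiv (hKH : IsFrobeniusDecomposition K H) :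
    IsLinEquiv G (((_ : Fin (Nat.card H)) × (G ⧸ H)) ⊕ (G ⧸ K))
      (((_ : Fin (Nat.card H)) × (G ⧸ (⊤ : Subgroup G))) ⊕ G) := by
  classical
  intro g
  have card_fixedBy_point : Nat.card (fixedBy (G ⧸ (⊤ : Subgroup G)) g) = 1 := by
    rw [fixedBy_quotient_of_mem_normal (Subgroup.mem_top g), Nat.card_univ,
      ← Subgroup.index_eq_card, Subgroup.index_top]
  simp only [card_fixedBy_sum, card_fixedBy_sigma_const, Nat.card_fin, card_fixedBy_point,
    hKH.card_mul_card_fixedBy_add_card_fixedBy g]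
  split_ifs with hg
  · rw [hg, card_fixedBy_one, mul_one, add_comm]
  · rw [fixedBy_self_eq_empty hg]
    simp

lemma orbitCountOfSize_one_ne (hKH : IsFrobeniusDecomposition K H) (hK : K ≠ ⊥) (hH : H ≠ ⊥) :
    orbitCountOfSize G (((_ : Fin (Nat.card H)) × (G ⧸ H)) ⊕ (G ⧸ K)) 1 ≠
      orbitCountOfSize G (((_ : Fin (Nat.card H)) × (G ⧸ (⊤ : Subgroup G))) ⊕ G) 1 := by
  have complement_ne_top : H ≠ ⊤ := fun h =>
    hK (Subgroup.isComplement'_top_right.1 (h ▸ hKH.isComplement'))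
  have kernel_ne_top : K ≠ ⊤ := fun h =>
    hH (Subgroup.isComplement'_top_left.1 (h ▸ hKH.isComplement'))
  have no_fixedPoints :
      fixedPoints G (((_ : Fin (Nat.card H)) × (G ⧸ H)) ⊕ (G ⧸ K)) = ∅ := by
    refine Set.eq_empty_of_forall_notMem ?_
    rintro (⟨i, x⟩ | y) hfix
    · exact (fixedPoints_quotient_eq_empty complement_ne_top).subset
        fun g => by simpa [Sigma.ext_iff] using hfix g
    · exact (fixedPoints_quotient_eq_empty kernel_ne_top).subset
        fun g => by simpa using hfix g
  have point_mem_fixedPoints :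
      .inl ⟨⟨0, Nat.card_pos⟩, ((1 : G) : G ⧸ (⊤ : Subgroup G))⟩ ∈
        fixedPoints G (((_ : Fin (Nat.card H)) × (G ⧸ (⊤ : Subgroup G))) ⊕ G) :=
    fun g => by simp [Sigma.ext_iff, eq_iff_true_of_subsingleton]
  rw [orbitCountOfSize_one_eq_zero_iff.2 no_fixedPoints]
  exact fun h => (orbitCountOfSize_one_eq_zero_iff.1 h.symm).subset point_mem_fixedPoints

end IsFrobeniusDecomposition

section PrimeProduct

variable {G : Type*} [Group G] {p q : ℕ}

lemma orderOf_eq_of_mem_of_card_prime {H : Subgroup G} (hp : p.Prime) (hH : Nat.card H = p)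
    {x : G} (hx : x ∈ H) (hx1 : x ≠ 1) : orderOf x = p :=
  (hp.eq_one_or_self_of_dvd _ (hH ▸ Subgroup.orderOf_dvd_natCard H hx)).resolve_left
    (mt orderOf_eq_one_iff.1 hx1)

lemma minFac_mul_of_prime_of_le (hp : p.Prime) (hq : q.Prime) (hpq : p ≤ q) :
    (p * q).minFac = p := by
  refine (Nat.minFac_le_of_dvd hp.two_le (dvd_mul_right p q)).antisymm ?_
  refine (Nat.le_minFac.2 fun r hr hrpq => ?_).resolve_left
    fun h => hp.ne_one (Nat.eq_one_of_mul_eq_one_right h)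
  rcases hr.dvd_mul.1 hrpq with hrp | hrq
  · exact ((Nat.prime_dvd_prime_iff_eq hr hp).1 hrp).ge
  · exact hpq.trans ((Nat.prime_dvd_prime_iff_eq hr hq).1 hrq).ge

lemma normal_of_card_eq_mul_of_le (hp : p.Prime) (hq : q.Prime) (hpq : p ≤ q)
    (hG : Nat.card G = p * q) {Q : Subgroup G} (hQ : Nat.card Q = q) : Q.Normal := by
  refine Subgroup.normal_of_index_eq_minFac_card ?_
  rw [hG, minFac_mul_of_prime_of_le hp hq hpq]
  refine Nat.eq_of_mul_eq_mul_left hq.pos ?_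
  rw [← hQ, Q.card_mul_index, hG, hQ, mul_comm]

lemma isCyclic_of_commute_of_coprime_orderOf [Finite G] {x y : G} (hxy : Commute x y)
    (hcoprime : (orderOf x).Coprime (orderOf y)) (hG : orderOf x * orderOf y = Nat.card G) :
    IsCyclic G :=
  isCyclic_of_orderOf_eq_card (x * y)
    ((hxy.orderOf_mul_eq_mul_orderOf_of_coprime hcoprime).trans hG)

lemma isFrobeniusDecomposition_of_card_eq_mul [Finite G] (hp : p.Prime) (hq : q.Prime)
    (hpq : p < q) (hG : Nat.card G = p * q) (hnab : ¬ ∀ a b : G, a * b = b * a)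
    {Q P : Subgroup G} (hQ : Nat.card Q = q) (hP : Nat.card P = p) :
    IsFrobeniusDecomposition Q P where
  normal := normal_of_card_eq_mul_of_le hp hq hpq.le hG hQ
  isComplement' := by
    refine Subgroup.isComplement'_of_coprime ?_ ?_
    · rw [hQ, hP, hG, mul_comm]
    · rw [hQ, hP]
      exact (Nat.coprime_primes hq hp).2 hpq.ne'
  eq_one_of_commute {h x} hh hh1 hx hcomm := by
    by_contra hx1
    have orderOf_h := orderOf_eq_of_mem_of_card_prime hp hP hh hh1
    have orderOf_x := orderOf_eq_of_mem_of_card_prime hq hQ hx hx1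
    have : IsCyclic G := isCyclic_of_commute_of_coprime_orderOf hcomm
      (by rw [orderOf_h, orderOf_x]; exact (Nat.coprime_primes hp hq).2 hpq.ne)
      (by rw [orderOf_h, orderOf_x, hG])
    exact hnab IsCyclic.isMulCommutative.is_comm.comm

end PrimeProduct

theorem nonabelian_pq_unbalanced_pair_general {G : Type} [Group G] [Finite G] [DecidableEq G]
    {K H : Subgroup G} (hKH : IsFrobeniusDecomposition K H) (hK : K ≠ ⊥) (hH : H ≠ ⊥) :
    (∀ g : G,
        Nat.card H * Nat.card (fixedBy (G ⧸ H) g) + Nat.card (fixedBy (G ⧸ K) g)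
          = if g = 1 then Nat.card G + Nat.card H else Nat.card H) ∧
      IsUnbalancedPair G
        (((_ : Fin (Nat.card H)) × (G ⧸ H)) ⊕ (G ⧸ K))
        (((_ : Fin (Nat.card H)) × (G ⧸ (⊤ : Subgroup G))) ⊕ G) :=
  ⟨hKH.card_mul_card_fixedBy_add_card_fixedBy, hKH.isLinEquiv, 1,
    hKH.orbitCountOfSize_one_ne hK hH⟩

/-- Let `G` be a nonabelian group of order `p * q` with `p < q` primes, `Q ≤ G` the
subgroup of order `q` and `P ≤ G` a subgroup of order `p`.  Then for every `g ∈ G`,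
`p ⬝ |Fix_{G/P}(g)| + |Fix_{G/Q}(g)|` equals `p ⬝ q + p` if `g = 1` and `p` otherwise.
Consequently, the disjoint union of `p` copies of `G ⧸ P` with one copy of `G ⧸ Q` and the
disjoint union of `p` one-point `G`-sets (copies of `G ⧸ ⊤`) with one copy of `G` (regular
action) are linearly equivalent and form an unbalanced pair. -/
theorem nonabelian_pq_unbalanced_pair
    (p q : ℕ) (hp : p.Prime) (hq : q.Prime) (hpq : p < q)
    (G : Type) [Group G] [Fintype G] [DecidableEq G] (hG : Fintype.card G = p * q)
    (hnab : ¬ ∀ a b : G, a * b = b * a)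
    (Q P : Subgroup G) (hQ : Nat.card Q = q) (hP : Nat.card P = p) :
    (∀ g : G,
        p * Nat.card (fixedBy (G ⧸ P) g) + Nat.card (fixedBy (G ⧸ Q) g)
          = if g = 1 then p * q + p else p) ∧
      IsUnbalancedPair G
        (((_ : Fin p) × (G ⧸ P)) ⊕ (G ⧸ Q))
        (((_ : Fin p) × (G ⧸ (⊤ : Subgroup G))) ⊕ G) := by
  subst hQ hP
  rw [← Nat.card_eq_fintype_card] at hG
  rw [← hG]
  exact nonabelian_pq_unbalanced_pair_general
    (isFrobeniusDecomposition_of_card_eq_mul hp hq hpq hG hnab rfl rfl)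
    (Q.one_lt_card_iff_ne_bot.1 hq.one_lt) (P.one_lt_card_iff_ne_bot.1 hp.one_lt)
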